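/- For every ε > 0 there exists a constant C > 0 such that for all integers k ≥ 3, all positive integers n with n ≤ k, and every integer t with C · k^(2+ε) ≤ t, every equinumerous t-coloring of [t·n] contains a rainbow arithmetic progression of length k. -/

import Mathlib

/-- `c` is an equinumerous `t`-coloring of `[t*n] = {1, ..., t*n}`:
each color class `c⁻¹(i)` for `i ∈ {1, ..., t}` has exactly `n` elements. -/
def EquinumerousColoring (t n : ℕ) (c : ℕ → ℕ) : Prop :=
  ∀ i, 1 ≤ i → i ≤ t → ((Finset.Icc 1 (t * n)).filter (fun x => c x = i)).card = n

/-- The arithmetic progression with first term `a`, common difference `d` and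
length `k` is rainbow with respect to the coloring `c`. -/
def RainbowAP (k : ℕ) (c : ℕ → ℕ) (a d : ℕ) : Prop :=
  ∀ i < k, ∀ j < k, c (a + i * d) = c (a + j * d) → i = j

/-!
Let `2 * k ≤ N`. Among the at least `N ^ 2 / (16 * k)` progressions of length `k` in `{1, ..., N}`,
one that is not rainbow contains two terms `x < y` of the same colour, and these lie `m < k` steps
apart for some divisor `m` of `y - x`. If colour classes have at most `n` elements and every `D < N`
has at most `M` divisors below `k`, there are at most `n * N` such pairs, each lying in at most
`k * M` progressions, so a rainbow progression exists as soon as `N > 16 * k ^ 2 * n * M`. When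
`N > 16 * k ^ 3 * n`, the trivial choice `M = k` suffices; otherwise `N` is polynomially bounded in
`k`, and the divisor bound allows `M = O(k ^ ε)`.

The divisor bound `d(n) ≤ C * n ^ δ` is proved one prime power at a time: `e + 1 ≤ (p ^ e) ^ δ` once
`p ^ δ ≥ 2`, and each of the finitely many smaller primes costs a constant factor.
-/

section DivisorBound

open Finset Real

lemma add_one_le_one_add_inv_mul_exp {s x : ℝ} (hs : 0 < s) (hx : 0 ≤ x) :
    x + 1 ≤ (1 + s⁻¹) * exp (s * x) := by
  calc x + 1 ≤ s * x + 1 + x + s⁻¹ := by linarith [mul_nonneg hs.le hx, inv_pos.mpr hs]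
    _ = (1 + s⁻¹) * (s * x + 1) := by field_simp; ring
    _ ≤ (1 + s⁻¹) * exp (s * x) := by gcongr; exact add_one_le_exp _

lemma natCast_add_one_le_mul_pow_rpow {δ p : ℝ} (hδ : 0 < δ) (hp : 2 ≤ p) (e : ℕ) :
    (e : ℝ) + 1 ≤ (1 + (δ * log 2)⁻¹) * (p ^ e) ^ δ := by
  have hexp : exp (δ * log 2 * e) = ((2 : ℝ) ^ e) ^ δ := by
    rw [rpow_def_of_pos (by positivity), log_pow]
    ring_nf
  calc (e : ℝ) + 1 ≤ (1 + (δ * log 2)⁻¹) * ((2 : ℝ) ^ e) ^ δ :=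
        hexp ▸ add_one_le_one_add_inv_mul_exp (by positivity) e.cast_nonneg
    _ ≤ (1 + (δ * log 2)⁻¹) * (p ^ e) ^ δ := by gcongr

lemma natCast_add_one_le_pow_rpow {δ p : ℝ} (hδ : 0 < δ) (hp : 2 ^ δ⁻¹ ≤ p) (e : ℕ) :
    (e : ℝ) + 1 ≤ (p ^ e) ^ δ := by
  have hp0 : 0 ≤ p := le_trans (by positivity) hp
  have htwo : 2 ≤ p ^ δ := (rpow_inv_le_iff_of_pos zero_le_two hp0 hδ).mp hp
  calc (e : ℝ) + 1 ≤ 2 ^ e := mod_cast Nat.lt_two_pow_self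
    _ ≤ (p ^ δ) ^ e := by gcongr
    _ = (p ^ e) ^ δ := rpow_pow_comm hp0 δ e

lemma natCast_rpow_eq_prod_primeFactors {n : ℕ} (hn : n ≠ 0) (δ : ℝ) :
    (n : ℝ) ^ δ = ∏ p ∈ n.primeFactors, ((p : ℝ) ^ n.factorization p) ^ δ := by
  rw [Real.finsetProd_rpow _ _ fun p _ ↦ by positivity]
  congr 1
  exact_mod_cast (Nat.prod_factorization_pow_eq_self hn).symm

theorem exists_card_divisors_le_mul_rpow {δ : ℝ} (hδ : 0 < δ) :
    ∃ C : ℝ, 0 < C ∧ ∀ n : ℕ, n ≠ 0 → (#n.divisors : ℝ) ≤ C * (n : ℝ) ^ δ := by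
  obtain ⟨P, hP⟩ := exists_nat_ge ((2 : ℝ) ^ δ⁻¹)
  set K : ℝ := 1 + (δ * log 2)⁻¹
  have hK : 1 ≤ K := le_add_of_nonneg_right (by positivity)
  have hlocal (p e : ℕ) (hp : 2 ≤ p) :
      (e : ℝ) + 1 ≤ (if p < P then K else 1) * ((p : ℝ) ^ e) ^ δ := by
    split_ifs with hpP
    · exact natCast_add_one_le_mul_pow_rpow hδ (mod_cast hp) e
    · rw [one_mul]
      exact natCast_add_one_le_pow_rpow hδ (hP.trans (mod_cast not_lt.mp hpP)) e
  have hsmall (n : ℕ) : ∏ p ∈ n.primeFactors, (if p < P then K else 1) ≤ K ^ P := by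
    rw [← prod_filter, prod_const]
    refine pow_le_pow_right₀ hK ?_
    calc #{p ∈ n.primeFactors | p < P} ≤ #(range P) :=
          card_le_card fun p hp ↦ mem_range.mpr (mem_filter.mp hp).2
      _ = P := card_range P
  refine ⟨K ^ P, by positivity, fun n hn ↦ ?_⟩
  calc (#n.divisors : ℝ) = ∏ p ∈ n.primeFactors, ((n.factorization p : ℝ) + 1) := by
        rw [Nat.card_divisors hn]; push_cast; rfl
    _ ≤ ∏ p ∈ n.primeFactors,
          (if p < P then K else 1) * ((p : ℝ) ^ n.factorization p) ^ δ :=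
        prod_le_prod (fun _ _ ↦ by positivity) fun p hp ↦
          hlocal p _ (Nat.prime_of_mem_primeFactors hp).two_le
    _ = (∏ p ∈ n.primeFactors, (if p < P then K else 1)) * (n : ℝ) ^ δ := by
        rw [prod_mul_distrib, natCast_rpow_eq_prod_primeFactors hn]
    _ ≤ K ^ P * (n : ℝ) ^ δ := by gcongr; exact hsmall n

lemma exists_card_divisors_le_of_le_mul_pow {ε : ℝ} (hε : 0 < ε) (b : ℕ) {A : ℕ} (hA : A ≠ 0) :
    ∃ B : ℝ, 0 ≤ B ∧ ∀ k D : ℕ, D ≤ b * k ^ A → (#D.divisors : ℝ) ≤ B * (k : ℝ) ^ ε := by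
  obtain ⟨C, hC, hdiv⟩ := exists_card_divisors_le_mul_rpow (δ := ε / A) (by positivity)
  refine ⟨C * (b : ℝ) ^ (ε / A), by positivity, fun k D hD ↦ ?_⟩
  obtain rfl | hD0 := eq_or_ne D 0
  · simp only [Nat.divisors_zero, card_empty, Nat.cast_zero]
    positivity
  calc (#D.divisors : ℝ) ≤ C * (D : ℝ) ^ (ε / A) := hdiv D hD0
    _ ≤ C * (b * (k : ℝ) ^ A) ^ (ε / A) := by gcongr; exact_mod_cast hD
    _ = C * (b : ℝ) ^ (ε / A) * (k : ℝ) ^ ε := by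
        rw [mul_rpow (by positivity) (by positivity), ← rpow_natCast_mul (by positivity),
          mul_div_cancel₀ ε (by positivity), mul_assoc]

lemma card_divisors_filter_lt_le (D k : ℕ) : #{m ∈ D.divisors | m < k} ≤ k := by
  calc #{m ∈ D.divisors | m < k} ≤ #(range k) :=
        card_le_card fun m hm ↦ mem_range.mpr (mem_filter.mp hm).2
    _ = k := card_range k

end DivisorBound

section Progressions

open Finset

/-- The progressions of length `k` in `{1, ..., N}`, as pairs of a first term and a common
difference. The bound `d ≤ N` only matters for `k ≤ 1`, where it keeps the set finite. -/
def progressionsIn (k N : ℕ) : Finset (ℕ × ℕ) :=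
  {p ∈ Icc 1 N ×ˢ Icc 1 N | p.1 + (k - 1) * p.2 ≤ N}

/-- Candidates `(a, d)` for the progressions of length `k` through `x < y`: the position `i` of `x`
and the number `m` of steps from `x` to `y` determine `d = (y - x) / m` and `a = x - i * d`. Some
candidates are spurious, e.g. when the subtraction truncates, which is harmless for upper bounds. -/
def progressionsThrough (k x y : ℕ) : Finset (ℕ × ℕ) :=
  (range k ×ˢ {m ∈ (y - x).divisors | m < k}).image
    fun q ↦ (x - q.1 * ((y - x) / q.2), (y - x) / q.2)

lemma le_two_mul_mul_div {q N : ℕ} (hq : 0 < q) (hqN : q ≤ N) : N ≤ 2 * (q * (N / q)) := by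
  have hlt : N < q * (N / q + 1) := Nat.lt_mul_div_succ N hq
  have hle : q * 1 ≤ q * (N / q) := Nat.mul_le_mul_left q ((Nat.one_le_div_iff hq).mpr hqN)
  linarith

lemma sq_le_mul_card_progressionsIn {k N : ℕ} (hk : 0 < k) (hkN : 2 * k ≤ N) :
    N ^ 2 ≤ 16 * k * #(progressionsIn k N) := by
  have hbox : Icc 1 (N / 2) ×ˢ Icc 1 (N / (2 * k)) ⊆ progressionsIn k N := by
    rintro ⟨a, d⟩ had
    simp only [progressionsIn, mem_filter, mem_product, mem_Icc] at had ⊢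
    have hdN : d ≤ N := had.2.2.trans (Nat.div_le_self _ _)
    have hd : d * (2 * k) ≤ N := (Nat.le_div_iff_mul_le (by lia)).mp had.2.2
    have hkd : (k - 1) * d ≤ k * d := Nat.mul_le_mul_right d (Nat.sub_le k 1)
    lia
  calc N ^ 2 = N * N := sq N
    _ ≤ 2 * (2 * (N / 2)) * (2 * (2 * k * (N / (2 * k)))) :=
        Nat.mul_le_mul (le_two_mul_mul_div two_pos (by lia)) (le_two_mul_mul_div (by lia) hkN)
    _ = 16 * k * #(Icc 1 (N / 2) ×ˢ Icc 1 (N / (2 * k))) := by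
        simp only [card_product, Nat.card_Icc, Nat.add_sub_cancel]; ring
    _ ≤ 16 * k * #(progressionsIn k N) := Nat.mul_le_mul_left _ (card_le_card hbox)

lemma mem_progressionsThrough {k a d i j : ℕ} (hd : 0 < d) (hij : i < j) (hjk : j < k) :
    (a, d) ∈ progressionsThrough k (a + i * d) (a + j * d) := by
  have hsub : a + j * d - (a + i * d) = (j - i) * d := by
    rw [Nat.add_sub_add_left, Nat.sub_mul]
  have hji : 0 < j - i := Nat.sub_pos_of_lt hij
  have hdiv : (j - i) * d / (j - i) = d := Nat.mul_div_cancel_left d hji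
  refine mem_image.mpr ⟨(i, j - i), ?_, ?_⟩
  · simp only [mem_product, mem_range, mem_filter, hsub, Nat.mem_divisors]
    exact ⟨hij.trans hjk, ⟨dvd_mul_right _ _, (Nat.mul_pos hji hd).ne'⟩, by lia⟩
  · simp only [hsub, hdiv, Nat.add_sub_cancel]

lemma card_progressionsThrough_le (k x y : ℕ) :
    #(progressionsThrough k x y) ≤ k * #{m ∈ (y - x).divisors | m < k} := by
  calc #(progressionsThrough k x y) ≤ #(range k ×ˢ {m ∈ (y - x).divisors | m < k}) := card_image_le
    _ = k * #{m ∈ (y - x).divisors | m < k} := by rw [card_product, card_range]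

lemma exists_lt_map_eq_of_not_injOn {ι α : Type*} [LinearOrder ι] {f : ι → α} {s : Set ι}
    (hf : ¬ Set.InjOn f s) : ∃ i ∈ s, ∃ j ∈ s, i < j ∧ f i = f j := by
  simp only [Set.InjOn] at hf
  push Not at hf
  obtain ⟨i, hi, j, hj, hfij, hne⟩ := hf
  obtain hij | hji := hne.lt_or_gt
  · exact ⟨i, hi, j, hj, hij, hfij⟩
  · exact ⟨j, hj, i, hi, hji, hfij.symm⟩

end Progressions

section Coloring

open Finset

variable {α : Type*} [DecidableEq α] {c : ℕ → α} {k n M N : ℕ}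

/-- The pairs `x < y` in `{1, ..., N}` of the same colour under `c`. -/
def monochromaticPairs (c : ℕ → α) (N : ℕ) : Finset (ℕ × ℕ) :=
  {p ∈ Icc 1 N ×ˢ Icc 1 N | p.1 < p.2 ∧ c p.1 = c p.2}

lemma card_monochromaticPairs_le (hc : ∀ i, #{x ∈ Icc 1 N | c x = i} ≤ n) :
    #(monochromaticPairs c N) ≤ n * N := by
  have hfst : ∀ p ∈ monochromaticPairs c N, p.1 ∈ Icc 1 N := fun p hp ↦
    (mem_product.mp (mem_filter.mp hp).1).1
  have hfiber (x : ℕ) : #{p ∈ monochromaticPairs c N | p.1 = x} ≤ n := by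
    refine le_trans (card_le_card_of_injOn Prod.snd ?_ ?_) (hc (c x))
    · rintro ⟨_, y⟩ hp
      simp only [monochromaticPairs, coe_filter, mem_filter, mem_product, Set.mem_ofPred_eq] at hp ⊢
      obtain ⟨⟨⟨-, hy⟩, -, hcolor⟩, rfl⟩ := hp
      exact ⟨hy, hcolor.symm⟩
    · intro p hp q hq hpq
      exact Prod.ext ((mem_filter.mp hp).2.trans (mem_filter.mp hq).2.symm) hpq
  simpa only [Nat.card_Icc, Nat.add_sub_cancel] using
    card_le_mul_card_image_of_maps_to hfst n fun x _ ↦ hfiber x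

lemma exists_mem_progressionsThrough_of_not_injOn {a d : ℕ} (had : (a, d) ∈ progressionsIn k N)
    (hrep : ¬ Set.InjOn (fun i ↦ c (a + i * d)) (Set.Iio k)) :
    ∃ p ∈ monochromaticPairs c N, (a, d) ∈ progressionsThrough k p.1 p.2 := by
  simp only [progressionsIn, mem_filter, mem_product, mem_Icc] at had
  obtain ⟨⟨⟨ha, -⟩, hd, -⟩, hlast⟩ := had
  have hterm {i : ℕ} (hi : i < k) : a + i * d ∈ Icc 1 N := by
    have hid : i * d ≤ (k - 1) * d := Nat.mul_le_mul_right d (Nat.le_sub_one_of_lt hi)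
    exact mem_Icc.mpr ⟨by lia, by lia⟩
  obtain ⟨i, hik, j, hjk, hij, hcolor⟩ := exists_lt_map_eq_of_not_injOn hrep
  have hlt : a + i * d < a + j * d := Nat.add_lt_add_left (Nat.mul_lt_mul_of_pos_right hij hd) a
  exact ⟨(a + i * d, a + j * d),
    mem_filter.mpr ⟨mem_product.mpr ⟨hterm hik, hterm hjk⟩, hlt, hcolor⟩,
    mem_progressionsThrough hd hij hjk⟩

lemma card_progressionsIn_le_of_forall_not_injOn (hc : ∀ i, #{x ∈ Icc 1 N | c x = i} ≤ n)
    (hM : ∀ D < N, #{m ∈ D.divisors | m < k} ≤ M)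
    (hrep : ∀ p ∈ progressionsIn k N, ¬ Set.InjOn (fun i ↦ c (p.1 + i * p.2)) (Set.Iio k)) :
    #(progressionsIn k N) ≤ n * N * (k * M) := by
  have hcover : progressionsIn k N ⊆
      (monochromaticPairs c N).biUnion fun p ↦ progressionsThrough k p.1 p.2 := fun p hp ↦
    mem_biUnion.mpr (exists_mem_progressionsThrough_of_not_injOn hp (hrep p hp))
  have hthrough : ∀ p ∈ monochromaticPairs c N, #(progressionsThrough k p.1 p.2) ≤ k * M := by
    intro p hp
    simp only [monochromaticPairs, mem_filter, mem_product, mem_Icc] at hp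
    exact (card_progressionsThrough_le k p.1 p.2).trans
      (Nat.mul_le_mul_left k (hM _ (by lia)))
  calc #(progressionsIn k N)
      ≤ #((monochromaticPairs c N).biUnion fun p ↦ progressionsThrough k p.1 p.2) :=
        card_le_card hcover
    _ ≤ #(monochromaticPairs c N) * (k * M) := card_biUnion_le_card_mul _ _ _ hthrough
    _ ≤ n * N * (k * M) := Nat.mul_le_mul_right _ (card_monochromaticPairs_le hc)

theorem exists_injOn_progression (hk : 0 < k) (hkN : 2 * k ≤ N)
    (hc : ∀ i, #{x ∈ Icc 1 N | c x = i} ≤ n) (hM : ∀ D < N, #{m ∈ D.divisors | m < k} ≤ M)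
    (hN : 16 * k ^ 2 * n * M < N) :
    ∃ a d : ℕ, 1 ≤ a ∧ 1 ≤ d ∧ a + (k - 1) * d ≤ N ∧
      Set.InjOn (fun i ↦ c (a + i * d)) (Set.Iio k) := by
  suffices h : ∃ p ∈ progressionsIn k N, Set.InjOn (fun i ↦ c (p.1 + i * p.2)) (Set.Iio k) by
    obtain ⟨⟨a, d⟩, had, hinj⟩ := h
    simp only [progressionsIn, mem_filter, mem_product, mem_Icc] at had
    exact ⟨a, d, had.1.1.1, had.1.2.1, had.2, hinj⟩
  by_contra! hrep
  refine lt_irrefl (N ^ 2) ?_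
  calc N ^ 2 ≤ 16 * k * #(progressionsIn k N) := sq_le_mul_card_progressionsIn hk hkN
    _ ≤ 16 * k * (n * N * (k * M)) :=
        Nat.mul_le_mul_left _ (card_progressionsIn_le_of_forall_not_injOn hc hM hrep)
    _ = 16 * k ^ 2 * n * M * N := by ring
    _ < N * N := Nat.mul_lt_mul_of_pos_right hN (by lia)
    _ = N ^ 2 := (sq N).symm

lemma EquinumerousColoring.card_filter_eq_le {t : ℕ} {c : ℕ → ℕ} (hc : EquinumerousColoring t n c)
    (i : ℕ) : #{x ∈ Icc 1 (t * n) | c x = i} ≤ n := by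
  by_cases hi : i ∈ Icc 1 t
  · exact (hc i (mem_Icc.mp hi).1 (mem_Icc.mp hi).2).le
  have hclasses : ∑ j ∈ Icc 1 t, #{x ∈ Icc 1 (t * n) | c x = j} = t * n := by
    rw [sum_congr rfl fun j hj ↦ hc j (mem_Icc.mp hj).1 (mem_Icc.mp hj).2]
    simp
  have htotal : #{x ∈ Icc 1 (t * n) | c x = i} + t * n ≤ t * n := by
    calc _ = ∑ j ∈ insert i (Icc 1 t), #{x ∈ Icc 1 (t * n) | c x = j} := by
          rw [sum_insert hi, hclasses]
      _ ≤ #(Icc 1 (t * n)) := by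
          rw [sum_card_fiberwise_eq_card_filter]; exact card_filter_le _ _
      _ = t * n := by simp
  lia

theorem rainbow_AP_small_n_general (A : ℕ) (ε : ℝ) (hε : 0 < ε) :
    ∃ C : ℝ, 0 < C ∧ ∀ k : ℕ, 0 < k → ∀ n : ℕ, 0 < n → n ≤ k ^ A →
      ∀ N : ℕ, C * (k : ℝ) ^ ((2 : ℝ) + ε) * n ≤ N →
        ∀ {α : Type*} [DecidableEq α] (c : ℕ → α), (∀ i, #{x ∈ Icc 1 N | c x = i} ≤ n) →
          ∃ a d : ℕ, 1 ≤ a ∧ 1 ≤ d ∧ a + (k - 1) * d ≤ N ∧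
            Set.InjOn (fun i ↦ c (a + i * d)) (Set.Iio k) := by
  obtain ⟨B, hB, hdiv⟩ := exists_card_divisors_le_of_le_mul_pow hε 16 (A := 3 + A) (by lia)
  refine ⟨16 * B + 2, by positivity, fun k hk n hn hnk N hN α _ c hc ↦ ?_⟩
  have hk1 : (1 : ℝ) ≤ k := mod_cast hk
  have hn1 : (1 : ℝ) ≤ n := mod_cast hn
  rw [Real.rpow_add (by positivity), Real.rpow_two, mul_assoc] at hN
  set X : ℝ := (k : ℝ) ^ 2 * (k : ℝ) ^ ε * n
  have hkX : k ≤ X := by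
    calc (k : ℝ) = (k : ℝ) ^ 1 * 1 * 1 := by ring
      _ ≤ (k : ℝ) ^ 2 * (k : ℝ) ^ ε * n := by
        gcongr
        exacts [one_le_two, Real.one_le_rpow hk1 hε.le]
  have hBX : 0 ≤ B * X := by positivity
  have hkN : 2 * k ≤ N := by exact_mod_cast (by linarith : 2 * (k : ℝ) ≤ N)
  obtain hlarge | hsmall := lt_or_ge (16 * k ^ 3 * n) N
  · exact exists_injOn_progression hk hkN hc (fun D _ ↦ card_divisors_filter_lt_le D k)
      (by linarith)
  refine exists_injOn_progression (M := ⌊B * (k : ℝ) ^ ε⌋₊) hk hkN hc (fun D hD ↦ ?_) ?_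
  · have hDk : D ≤ 16 * k ^ (3 + A) := by
      calc D ≤ 16 * k ^ 3 * n := hD.le.trans hsmall
        _ ≤ 16 * k ^ 3 * k ^ A := Nat.mul_le_mul_left _ hnk
        _ = 16 * k ^ (3 + A) := by ring
    exact (card_filter_le _ _).trans (Nat.le_floor (hdiv k D hDk))
  · suffices h : 16 * (k : ℝ) ^ 2 * n * ⌊B * (k : ℝ) ^ ε⌋₊ < N from mod_cast h
    calc 16 * (k : ℝ) ^ 2 * n * ⌊B * (k : ℝ) ^ ε⌋₊ ≤ 16 * (k : ℝ) ^ 2 * n * (B * (k : ℝ) ^ ε) := by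
          gcongr; exact Nat.floor_le (by positivity)
      _ = 16 * (B * X) := by ring
      _ < N := by linarith

end Coloring

/-- For every `ε > 0` there is a constant `C > 0` such that for all `k ≥ 3`,
all positive `n ≤ k`, and every `t` with `C * k^(2+ε) ≤ t`, every
equinumerous `t`-coloring of `[t*n]` contains a rainbow arithmetic
progression of length `k`. -/
theorem rainbow_AP_small_n (ε : ℝ) (hε : 0 < ε) :
    ∃ C : ℝ, 0 < C ∧ ∀ k : ℕ, 3 ≤ k → ∀ n : ℕ, 0 < n → n ≤ k →
      ∀ t : ℕ, C * (k : ℝ) ^ ((2 : ℝ) + ε) ≤ (t : ℝ) →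
        ∀ c : ℕ → ℕ, EquinumerousColoring t n c →
          ∃ a d : ℕ, 1 ≤ a ∧ 1 ≤ d ∧ a + (k - 1) * d ≤ t * n ∧
            RainbowAP k c a d := by
  obtain ⟨C, hC, h⟩ := rainbow_AP_small_n_general 1 ε hε
  refine ⟨C, hC, fun k hk n hn hnk t ht c hc ↦ h k (by lia) n hn (by lia) (t * n) ?_ c
    hc.card_filter_eq_le⟩
  push_cast
  gcongr
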